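/- Let M be a structure in a language ℒ, let α be an infinite ordinal, and let ā, b̄ be finite tuples from M of the same length with (M, ā) ≡_α (M, b̄). Suppose a ∈ M is the unique element of M realizing its quantifier-free type over ā. Then there is a unique b ∈ M with qftp^M(b, b̄) = qftp^M(a, ā), and for this b we have (M, āa) ≡_α (M, b̄b). -/

import Mathlib

open FirstOrder

universe u v w

namespace ScottTools

variable (L : FirstOrder.Language.{u, v}) (M : Type w) (N : Type w) [L.Structure M] [L.Structure N]

/-- Two tuples (of the same length) have the same quantifier-free type. -/
def QFEquiv {n : ℕ} (a : Fin n → M) (b : Fin n → N) : Prop :=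
  ∀ φ : L.Formula (Fin n), φ.IsQF → (φ.Realize a ↔ φ.Realize b)

/-- The ordinal-indexed back-and-forth equivalence `(M, ā) ≡_α (N, b̄)`:
`≡₀` is equality of quantifier-free types, `≡_{α+1}` is the back-and-forth condition
with respect to `≡_α`, and limit stages are intersections. -/
def BFEquiv : Ordinal.{w} → (n : ℕ) → (Fin n → M) → (Fin n → N) → Prop
  | α, n, a, b =>
    QFEquiv L M N a b ∧
    ∀ β : Ordinal.{w}, β < α →
      (∀ x : M, ∃ y : N, BFEquiv β (n + 1) (Fin.snoc a x) (Fin.snoc b y)) ∧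
      (∀ y : N, ∃ x : M, BFEquiv β (n + 1) (Fin.snoc a x) (Fin.snoc b y))
  termination_by α => α

/-- `(M, ā) ≡_∞ (N, b̄)`: back-and-forth equivalent for all ordinals. -/
def BFEquivInf (n : ℕ) (a : Fin n → M) (b : Fin n → N) : Prop :=
  ∀ α : Ordinal.{w}, BFEquiv L M N α n a b

/-- The Scott rank of a structure: the least ordinal `α` such that any two finite tuples
that are `≡_α`-equivalent are `≡_∞`-equivalent. -/
noncomputable def ScottRank : Ordinal.{w} :=
  sInf {α : Ordinal.{w} | ∀ (n : ℕ) (a b : Fin n → M),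
    BFEquiv L M M α n a b → BFEquivInf L M M n a b}

/-- `B` is a base for `M`: distinct elements of `M` have distinct complete first-order
types over `B`. -/
def IsBase (B : Set M) : Prop :=
  ∀ a b : M,
    (∀ (k : ℕ) (p : Fin k → M), (∀ i, p i ∈ B) →
      ∀ φ : L.Formula (Fin (k + 1)),
        (φ.Realize (Fin.snoc p a) ↔ φ.Realize (Fin.snoc p b))) →
    a = b

end ScottTools

open ScottTools

/-!
Let `x` be the unique realization of its quantifier-free type over `a`. One step of back-and-forth
gives a `y` such that `(a, x)` and `(b, y)` have the same quantifier-free type, and a second step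
shows that `y` is unique. The transfer of back-and-forth equivalence costs one step at the bottom,
not at the top: `a ≡_{1+α} b` implies `(a, x) ≡_α (b, y)`. Indeed, if `β < α` and
`(a, c) ≡_{1+β} (b, d)`, then some `y'` makes `(a, c, x)` and `(b, d, y')` agree on
quantifier-free formulas, uniqueness forces `y' = y`, and induction gives
`(a, c, x) ≡_β (b, d, y)`. For infinite `α` one has `1 + α = α`, so nothing is lost.
-/

namespace ScottTools

variable {L : FirstOrder.Language.{u, v}} {M N P : Type w}

local notation:67 a:67 "⌢" x:68 => Fin.snoc (α := fun _ => _) a x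

theorem snoc_comp {m n : ℕ} (a : Fin n → M) (x : M) (σ : Fin m → Fin n) :
    (a ∘ σ)⌢x = (a⌢x) ∘ ((Fin.castSucc ∘ σ)⌢Fin.last n) := by
  rw [Fin.comp_snoc, ← Function.comp_assoc, Fin.snoc_comp_castSucc, Fin.snoc_last]

/-- The reindexing that interchanges the last two entries of a tuple. -/
def swapLastTwo (n : ℕ) : Fin (n + 2) → Fin (n + 2) :=
  (Fin.castSucc ∘ Fin.castSucc)⌢Fin.last (n + 1)⌢(Fin.last n).castSucc

theorem snoc_snoc_comp_swapLastTwo {n : ℕ} (a : Fin n → M) (x y : M) :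
    (a⌢x⌢y) ∘ swapLastTwo n = a⌢y⌢x := by
  rw [swapLastTwo, Fin.comp_snoc, Fin.comp_snoc, ← Function.comp_assoc, Fin.snoc_comp_castSucc,
    Fin.snoc_comp_castSucc, Fin.snoc_last, Fin.snoc_castSucc, Fin.snoc_last]

variable [L.Structure M] [L.Structure N] [L.Structure P]

namespace QFEquiv

variable {m n : ℕ} {a : Fin n → M} {b : Fin n → N} {c : Fin n → P}

theorem symm (h : QFEquiv L M N a b) : QFEquiv L N M b a :=
  fun φ hφ => (h φ hφ).symm

theorem trans (h : QFEquiv L M N a b) (h' : QFEquiv L N P b c) : QFEquiv L M P a c :=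
  fun φ hφ => (h φ hφ).trans (h' φ hφ)

theorem comp (h : QFEquiv L M N a b) (σ : Fin m → Fin n) : QFEquiv L M N (a ∘ σ) (b ∘ σ) := by
  intro φ hφ
  simpa only [Language.Formula.realize_relabel] using h (φ.relabel σ) (hφ.relabel _)

theorem apply_eq_iff (h : QFEquiv L M N a b) (i j : Fin n) : a i = a j ↔ b i = b j := by
  simpa only [Language.Formula.realize_equal, Language.Term.realize_var]
    using h ((Language.var i).equal (Language.var j))
      (Language.BoundedFormula.IsAtomic.equal _ _).isQF

theorem of_snoc {x : M} {y : N} (h : QFEquiv L M N (a⌢x) (b⌢y)) : QFEquiv L M N a b := by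
  simpa only [Fin.snoc_comp_castSucc] using h.comp Fin.castSucc

theorem snoc_swap {x x' : M} {y y' : N} (h : QFEquiv L M N (a⌢x⌢x') (b⌢y⌢y')) :
    QFEquiv L M N (a⌢x'⌢x) (b⌢y'⌢y) := by
  simpa only [snoc_snoc_comp_swapLastTwo] using h.comp (swapLastTwo n)

theorem snoc_of_snoc_snoc {x x' : M} {y y' : N}
    (h : QFEquiv L M N (a⌢x⌢x') (b⌢y⌢y')) : QFEquiv L M N (a⌢x') (b⌢y') :=
  h.snoc_swap.of_snoc

end QFEquiv

variable (L) in
/-- `x` is the only element of `M` realizing its quantifier-free type over the tuple `a`. -/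
def IsUniqueRealization {n : ℕ} (a : Fin n → M) (x : M) : Prop :=
  ∀ x' : M, QFEquiv L M M (a⌢x') (a⌢x) → x' = x

theorem IsUniqueRealization.snoc {n : ℕ} {a : Fin n → M} {x : M}
    (hx : IsUniqueRealization L a x) (c : M) : IsUniqueRealization L (a⌢c) x :=
  fun x' h => hx x' h.snoc_of_snoc_snoc

namespace BFEquiv

variable {α β : Ordinal.{w}} {m n : ℕ} {a : Fin n → M} {b : Fin n → N}

theorem qfEquiv (h : BFEquiv L M N α n a b) : QFEquiv L M N a b := by
  rw [BFEquiv] at h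
  exact h.1

theorem forth (h : BFEquiv L M N α n a b) (hβ : β < α) (x : M) :
    ∃ y : N, BFEquiv L M N β (n + 1) (a⌢x) (b⌢y) := by
  rw [BFEquiv] at h
  exact (h.2 β hβ).1 x

theorem back (h : BFEquiv L M N α n a b) (hβ : β < α) (y : N) :
    ∃ x : M, BFEquiv L M N β (n + 1) (a⌢x) (b⌢y) := by
  rw [BFEquiv] at h
  exact (h.2 β hβ).2 y

theorem comp (h : BFEquiv L M N α n a b) (σ : Fin m → Fin n) :
    BFEquiv L M N α m (a ∘ σ) (b ∘ σ) := by
  induction α using WellFoundedLT.induction generalizing m n with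
  | ind α ih =>
    have reindex_snoc {β : Ordinal.{w}} (hβ : β < α) {x : M} {y : N}
        (hxy : BFEquiv L M N β (n + 1) (a⌢x) (b⌢y)) :
        BFEquiv L M N β (m + 1) ((a ∘ σ)⌢x) ((b ∘ σ)⌢y) := by
      rw [snoc_comp a, snoc_comp b]
      exact ih β hβ hxy _
    rw [BFEquiv]
    exact ⟨h.qfEquiv.comp σ, fun β hβ =>
      ⟨fun x => (h.forth hβ x).imp fun _ => reindex_snoc hβ,
        fun y => (h.back hβ y).imp fun _ => reindex_snoc hβ⟩⟩

theorem snoc_swap {x x' : M} {y y' : N}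
    (h : BFEquiv L M N α (n + 2) (a⌢x⌢x') (b⌢y⌢y')) :
    BFEquiv L M N α (n + 2) (a⌢x'⌢x) (b⌢y'⌢y) := by
  simpa only [snoc_snoc_comp_swapLastTwo] using h.comp (swapLastTwo n)

theorem existsUnique_qfEquiv_snoc (h : BFEquiv L M N α n a b) (hα : 1 < α) {x : M}
    (hx : IsUniqueRealization L a x) : ∃! y : N, QFEquiv L N M (b⌢y) (a⌢x) := by
  obtain ⟨y, hy⟩ := h.forth hα x
  refine ⟨y, hy.qfEquiv.symm, fun y' hy' => ?_⟩
  obtain ⟨x', hx'⟩ := hy.back zero_lt_one y'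
  obtain rfl : x' = x := hx x' (hx'.qfEquiv.snoc_of_snoc_snoc.trans hy')
  simpa only [Fin.snoc_last, Fin.snoc_castSucc, true_iff] using
    hx'.qfEquiv.apply_eq_iff (Fin.last (n + 1)) (Fin.last n).castSucc

theorem snoc_of_isUniqueRealization (h : BFEquiv L M N (1 + α) n a b) {x : M} {y : N}
    (hx : IsUniqueRealization L a x) (hxy : QFEquiv L M N (a⌢x) (b⌢y)) :
    BFEquiv L M N α (n + 1) (a⌢x) (b⌢y) := by
  induction α using WellFoundedLT.induction generalizing n with
  | ind α ih =>
    have insert_xy {β : Ordinal.{w}} (hβ : β < α) {c : M} {d : N}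
        (hcd : BFEquiv L M N (1 + β) (n + 1) (a⌢c) (b⌢d)) :
        BFEquiv L M N β (n + 2) (a⌢x⌢c) (b⌢y⌢d) := by
      obtain ⟨y', hy'⟩ := hcd.forth (zero_lt_one.trans_le le_self_add) x
      have one_lt : 1 < 1 + α := lt_add_of_pos_right 1 hβ.bot_lt
      obtain rfl : y' = y := (h.existsUnique_qfEquiv_snoc one_lt hx).unique
        hy'.qfEquiv.snoc_of_snoc_snoc.symm hxy.symm
      exact (ih β hβ hcd (hx.snoc c) hy'.qfEquiv).snoc_swap
    rw [BFEquiv]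
    refine ⟨hxy, fun β hβ => ?_⟩
    have one_add_lt : 1 + β < 1 + α := by gcongr
    exact ⟨fun c => (h.forth one_add_lt c).imp fun _ => insert_xy hβ,
      fun d => (h.back one_add_lt d).imp fun _ => insert_xy hβ⟩

end BFEquiv

end ScottTools

theorem unique_qf_extension_general {L : FirstOrder.Language.{u, v}} {M N : Type w}
    [L.Structure M] [L.Structure N] {n : ℕ} (α : Ordinal.{w}) (hα : 0 < α)
    (a : Fin n → M) (b : Fin n → N) (h : BFEquiv L M N (1 + α) n a b) (x : M)
    (hx : ∀ x' : M, QFEquiv L M M (Fin.snoc a x') (Fin.snoc a x) → x' = x) :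
    (∃! y : N, QFEquiv L N M (Fin.snoc b y) (Fin.snoc a x)) ∧
    ∀ y : N, QFEquiv L N M (Fin.snoc b y) (Fin.snoc a x) →
      BFEquiv L M N α (n + 1) (Fin.snoc a x) (Fin.snoc b y) :=
  ⟨h.existsUnique_qfEquiv_snoc (lt_add_of_pos_right 1 hα) hx,
    fun _ hy => h.snoc_of_isUniqueRealization hx hy.symm⟩

/-- If `α` is an infinite ordinal, `(M, ā) ≡_α (M, b̄)`, and `a` is the unique realization of
its quantifier-free type over `ā`, then there is a unique `b` with
`qftp(b̄, b) = qftp(ā, a)`, and for this `b` we have `(M, āa) ≡_α (M, b̄b)`. -/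
theorem unique_qf_extension {L : FirstOrder.Language.{u, v}} {M : Type w} [L.Structure M]
    {n : ℕ} (α : Ordinal.{w}) (hα : Ordinal.omega0 ≤ α) (a b : Fin n → M)
    (h : BFEquiv L M M α n a b) (x : M)
    (hx : ∀ x' : M, QFEquiv L M M (Fin.snoc a x') (Fin.snoc a x) → x' = x) :
    (∃! y : M, QFEquiv L M M (Fin.snoc b y) (Fin.snoc a x)) ∧
    ∀ y : M, QFEquiv L M M (Fin.snoc b y) (Fin.snoc a x) →
      BFEquiv L M M α (n + 1) (Fin.snoc a x) (Fin.snoc b y) := by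
  rw [← Ordinal.one_add_of_omega0_le hα] at h
  exact unique_qf_extension_general α (Ordinal.omega0_pos.trans_le hα) a b h x hx
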